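/- arXiv:2210.10939 — 4 statements merged into one kernel-verified Lean document; each statement's English description precedes it below -/
import Mathlib

section
/- Suppose Δ_{A[[t]]}(F) ≠ 0 and F_0(x) = ∏_ν (x − a_ν)^{n_ν} with the a_ν pairwise distinct. Fix ν and index the t-roots of F so that s_1,...,s_{n_ν} are exactly those with constant term a_ν. Then the limit of the generalized formal discriminant Δ(F, x − a_ν) evaluated at x = a_ν satisfies Δ(F, x − a_ν)(a_ν, t)_0 = [∏_{ν'≠ν} (a_ν − a_{ν'})^{n_{ν'}}]^{2n_ν − 2} · ∏_{1≤i<j≤n_ν} ((s_i − s_j)_0)². -/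
open Finset Polynomial

noncomputable section

/-- The limit of a Hahn (Puiseux) series as `t → 0`: the coefficient of the lowest
power of `t` occurring in it (its leading coefficient). -/
def lim0 {L : Type*} [Field L] (f : HahnSeries ℚ L) : L := f.coeff f.order

/-- `s` is a Puiseux series with nonnegative support and constant term `a`
(i.e. `s(0) = a`). -/
def HasConst {L : Type*} [Field L] (s : HahnSeries ℚ L) (a : L) : Prop :=
  s.coeff 0 = a ∧ ∀ q < (0 : ℚ), s.coeff q = 0

/-- The natural ring map `A[[t]] → L((t^ℚ))` induced by `φ : A →+* L`. -/
def Phi {A L : Type*} [CommRing A] [Field L] (φ : A →+* L) :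
    PowerSeries A →+* HahnSeries ℚ L :=
  (HahnSeries.ofPowerSeries ℚ L).comp (PowerSeries.map φ)

/-- The polynomial with power-series coefficients determined by a family
`F(x,t) = Σ_i p_i(x) t^i` of polynomials of degree at most `n'`. -/
def fam {A : Type*} [CommRing A] (n' : ℕ) (p : ℕ → Polynomial A) :
    Polynomial (PowerSeries A) :=
  ∑ j ∈ Finset.range (n' + 1), Polynomial.C (PowerSeries.mk fun i => (p i).coeff j) * X ^ j

/-- `∏_{q ≠ q'} (S q − S q')`, the product of the differences of all (ordered) pairs of
distinct `t`-roots.  For a monic family it equals `(-1)^(N(N-1)/2)` times the discriminant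
`Δ_{A[[t]]}(F) = ∏_{q<q'} (S q − S q')²`; in particular it is nonzero iff
`Δ_{A[[t]]}(F) ≠ 0`. -/
def rootsSep {L : Type*} [Field L] {ι : Type*} [Fintype ι] [DecidableEq ι]
    (S : ι → HahnSeries ℚ L) : HahnSeries ℚ L :=
  ∏ q ∈ Finset.univ.offDiag, (S q.1 - S q.2)

/-- `Δ(F, f_ν)(a ν ℓ, t)_0`: the limit of the generalized formal discriminant of the family
with respect to `f_ν = ∏_ℓ (x − a ν ℓ)`, evaluated at `x = a ν ℓ`.  Here the `t`-roots
approaching the roots of `f_ν` are grouped as `s ν · i` for `i` in `Fin (n ν)`; following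
Definition 2.3, `s'_i(x) = f_ν(x) − ∏_ℓ (x − s ν ℓ i)`, so that
`s'_i(x) − s'_j(x) = ∏_ℓ (x − s ν ℓ j) − ∏_ℓ (x − s ν ℓ i)`, and
`Δ(F,f_ν)(x,t) = [∏_{others} (x − s_ℓ)]^(2 n ν − 2) ∏_{i<j} (s'_i − s'_j)²`. -/
def gdlim {L : Type*} [Field L] {m : ℕ} (d n : Fin m → ℕ)
    (a : (ν : Fin m) → Fin (d ν) → L)
    (s : (ν : Fin m) → (ℓ : Fin (d ν)) → Fin (n ν) → HahnSeries ℚ L)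
    (ν : Fin m) (ℓ : Fin (d ν)) : L :=
  lim0 ((∏ ν' ∈ Finset.univ.erase ν, ∏ ℓ', ∏ i', (HahnSeries.C (a ν ℓ) - s ν' ℓ' i')) ^
      (2 * n ν - 2) *
    ∏ q ∈ Finset.univ.filter (fun q : Fin (n ν) × Fin (n ν) => q.1 < q.2),
      ((∏ ℓ', (HahnSeries.C (a ν ℓ) - s ν ℓ' q.2)) -
        ∏ ℓ', (HahnSeries.C (a ν ℓ) - s ν ℓ' q.1)) ^ 2)

/-- The discriminant `Δ(f) = ∏_{ℓ<ℓ'} (a ℓ − a ℓ')²` of a monic split polynomial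
`f = ∏_ℓ (x − a ℓ)`. -/
def discOf {L : Type*} [Field L] {d : ℕ} (a : Fin d → L) : L :=
  ∏ q ∈ Finset.univ.filter (fun q : Fin d × Fin d => q.1 < q.2), (a q.1 - a q.2) ^ 2

/-- The vertex `ver(F)` of the family (Definition 3.1), computed from the root data:
`ver(F) = ∏_{ν,ℓ} Δ(F,f_ν)(a_{νℓ},t)_0 · ∏_{ν<ν'} res(f_ν,f_{ν'})^(2(n_ν+n_{ν'}−n_ν n_{ν'}))`,
where `res(f_ν, f_{ν'}) = ∏_{ℓ,ℓ'} (a ν ℓ − a ν' ℓ')`. -/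
def ver {L : Type*} [Field L] {m : ℕ} (d n : Fin m → ℕ)
    (a : (ν : Fin m) → Fin (d ν) → L)
    (s : (ν : Fin m) → (ℓ : Fin (d ν)) → Fin (n ν) → HahnSeries ℚ L) : L :=
  (∏ ν, ∏ ℓ, gdlim d n a s ν ℓ) *
    ∏ ν, ∏ ν' ∈ Finset.Ioi ν,
      (∏ ℓ, ∏ ℓ', (a ν ℓ - a ν' ℓ')) ^
        (2 * ((n ν : ℤ) + (n ν' : ℤ) - (n ν : ℤ) * (n ν' : ℤ)))

section Limit

variable {L : Type*} [Field L]

theorem lim0_eq_leadingCoeff (f : HahnSeries ℚ L) : lim0 f = f.leadingCoeff :=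
  HahnSeries.leadingCoeff_eq.symm

/-- The limit `f ↦ f_0` as a monoid homomorphism. It is defined on all series, with the value `0`
at the zero series, where the paper leaves the limit undefined. -/
def lim0Hom (L : Type*) [Field L] : HahnSeries ℚ L →* L where
  toFun := lim0
  map_one' := by rw [lim0_eq_leadingCoeff, HahnSeries.leadingCoeff_one]
  map_mul' f g := by simp only [lim0_eq_leadingCoeff, HahnSeries.leadingCoeff_mul]

theorem lim0_mul (f g : HahnSeries ℚ L) : lim0 (f * g) = lim0 f * lim0 g :=
  map_mul (lim0Hom L) f g

theorem lim0_pow (f : HahnSeries ℚ L) (k : ℕ) : lim0 (f ^ k) = lim0 f ^ k :=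
  map_pow (lim0Hom L) f k

theorem lim0_prod {ι : Type*} (t : Finset ι) (f : ι → HahnSeries ℚ L) :
    lim0 (∏ i ∈ t, f i) = ∏ i ∈ t, lim0 (f i) :=
  map_prod (lim0Hom L) f t

end Limit

section ConstantTerm

variable {L : Type*} [Field L] {s r : HahnSeries ℚ L} {a b : L}

theorem hasConst_C (a : L) : HasConst (HahnSeries.C a) a :=
  ⟨HahnSeries.coeff_single_same 0 a, fun _ hq => HahnSeries.coeff_single_of_ne hq.ne⟩

theorem HasConst.sub (hs : HasConst s a) (hr : HasConst r b) : HasConst (s - r) (a - b) :=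
  ⟨by rw [HahnSeries.coeff_sub, hs.1, hr.1],
    fun q hq => by rw [HahnSeries.coeff_sub, hs.2 q hq, hr.2 q hq, sub_zero]⟩

theorem HasConst.ne_zero (hs : HasConst s a) (ha : a ≠ 0) : s ≠ 0 := by
  rintro rfl
  exact ha hs.1.symm

theorem HasConst.order_eq_zero (hs : HasConst s a) (ha : a ≠ 0) : s.order = 0 :=
  le_antisymm (HahnSeries.order_le_of_coeff_ne_zero (hs.1.trans_ne ha))
    ((HahnSeries.le_order_iff_forall (hs.ne_zero ha)).2 hs.2)

theorem HasConst.lim0_eq (hs : HasConst s a) (ha : a ≠ 0) : lim0 s = a := by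
  rw [lim0, hs.order_eq_zero ha, hs.1]

end ConstantTerm

theorem rootsSep_ne_zero_iff {L ι : Type*} [Field L] [Fintype ι] [DecidableEq ι]
    {S : ι → HahnSeries ℚ L} : rootsSep S ≠ 0 ↔ Function.Injective S := by
  simp only [rootsSep, Finset.prod_ne_zero_iff, Finset.mem_offDiag, Finset.mem_univ, true_and,
    sub_ne_zero, Prod.forall, Function.Injective, not_imp_not, ne_eq]

theorem stmt1_general {L ι : Type*} [Field L] [Fintype ι] [DecidableEq ι]
    (n : ι → ℕ) (a : ι → L) (s : (ν : ι) → Fin (n ν) → HahnSeries ℚ L)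
    (hs : ∀ ν i, HasConst (s ν i) (a ν))
    (ν : ι) (ha : ∀ ν' ≠ ν, a ν ≠ a ν') (hsν : Function.Injective (s ν)) :
    let Δ := (∏ ν' ∈ Finset.univ.erase ν, ∏ i', (HahnSeries.C (a ν) - s ν' i')) ^
        (2 * n ν - 2) *
      ∏ q ∈ Finset.univ.filter (fun q : Fin (n ν) × Fin (n ν) => q.1 < q.2),
        (s ν q.1 - s ν q.2) ^ 2
    Δ ≠ 0 ∧ lim0 Δ =
      (∏ ν' ∈ Finset.univ.erase ν, (a ν - a ν') ^ n ν') ^ (2 * n ν - 2) *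
        ∏ q ∈ Finset.univ.filter (fun q : Fin (n ν) × Fin (n ν) => q.1 < q.2),
          (lim0 (s ν q.1 - s ν q.2)) ^ 2 := by
  have constant_ne_zero : ∀ ν' ∈ Finset.univ.erase ν, a ν - a ν' ≠ 0 := fun ν' hν' =>
    sub_ne_zero.2 (ha ν' (Finset.ne_of_mem_erase hν'))
  have factor_hasConst (ν' i') : HasConst (HahnSeries.C (a ν) - s ν' i') (a ν - a ν') :=
    (hasConst_C (a ν)).sub (hs ν' i')
  refine ⟨mul_ne_zero (pow_ne_zero _ ?other_roots) ?root_differences, ?limit⟩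
  case other_roots =>
    exact Finset.prod_ne_zero_iff.2 fun ν' hν' => Finset.prod_ne_zero_iff.2 fun i' _ =>
      (factor_hasConst ν' i').ne_zero (constant_ne_zero ν' hν')
  case root_differences =>
    refine Finset.prod_ne_zero_iff.2 fun q hq => pow_ne_zero 2 (sub_ne_zero.2 ?_)
    exact hsν.ne (Finset.mem_filter.1 hq).2.ne
  case limit =>
    have lim0_other_roots : ∀ ν' ∈ Finset.univ.erase ν,
        ∏ i', lim0 (HahnSeries.C (a ν) - s ν' i') = (a ν - a ν') ^ n ν' := fun ν' hν' =>
      (Finset.prod_congr rfl fun i' _ =>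
        (factor_hasConst ν' i').lim0_eq (constant_ne_zero ν' hν')).trans (Fin.prod_const _ _)
    simp only [lim0_mul, lim0_pow, lim0_prod, Finset.prod_congr rfl lim0_other_roots]

/-- **Lemma 2.4.**  Suppose `Δ_{A[[t]]}(F) ≠ 0` and `F_0 = ∏_ν (x − a_ν)^{n_ν}` with the
`a_ν` pairwise distinct; let `s ν 1, ..., s ν (n_ν)` be the `t`-roots of `F` with constant
term `a_ν`.  Then for each `ν`,
`Δ(F, x − a_ν)(a_ν, t)_0 = [∏_{ν'≠ν} (a_ν − a_{ν'})^{n_{ν'}}]^(2n_ν−2) ·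
∏_{i<j} ((s_i − s_j)_0)²`. -/
theorem stmt1 {A L : Type*} [CommRing A] [IsDomain A]
    [Field L] [IsAlgClosed L] [CharZero L]
    (φ : A →+* L) (hφ : Function.Injective φ)
    (n' : ℕ) (p : ℕ → Polynomial A) (hdeg : ∀ i, (p i).natDegree ≤ n')
    (m : ℕ) (nn : Fin m → ℕ) (hnn : ∀ ν, 0 < nn ν)
    (hn' : n' = ∑ ν, nn ν)
    (a : Fin m → L) (ha : Function.Injective a)
    (hF0 : (p 0).map φ = ∏ ν, (X - C (a ν)) ^ nn ν)
    (s : (ν : Fin m) → Fin (nn ν) → HahnSeries ℚ L)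
    (hs : ∀ ν i, HasConst (s ν i) (a ν))
    (hsplit : (fam n' p).map (Phi φ) = ∏ ν, ∏ i, (X - C (s ν i)))
    (hΔ : rootsSep (fun q : Σ ν : Fin m, Fin (nn ν) => s q.1 q.2) ≠ 0)
    (ν : Fin m) :
    lim0 ((∏ ν' ∈ Finset.univ.erase ν, ∏ i', (HahnSeries.C (a ν) - s ν' i')) ^
        (2 * nn ν - 2) *
      ∏ q ∈ Finset.univ.filter (fun q : Fin (nn ν) × Fin (nn ν) => q.1 < q.2),
        (s ν q.1 - s ν q.2) ^ 2) =
      (∏ ν' ∈ Finset.univ.erase ν, (a ν - a ν') ^ nn ν') ^ (2 * nn ν - 2) *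
        ∏ q ∈ Finset.univ.filter (fun q : Fin (nn ν) × Fin (nn ν) => q.1 < q.2),
          (lim0 (s ν q.1 - s ν q.2)) ^ 2 := by
  exact (stmt1_general nn a s hs ν (fun _ hν' => ha.ne hν'.symm)
    ((rootsSep_ne_zero_iff.1 hΔ).comp sigma_mk_injective)).2
end
end

section
/- Let F(x,t) = x² A_{n−2}(x) + B_n(x) t + O(t²) be a family of polynomials of the first kind, where A_{n−2}(0)·B_n(0) ≠ 0, A_{n−2} is square-free with A_{n−2}(x) = ∏_i (x − a_i) for pairwise distinct nonzero a_i, and Δ_{A[[t]]}(F) ≠ 0. Then the type of F with respect to the factor f = x of F_0 = x² A_{n−2}(x) is τ = 1; more precisely, the two t-roots of F with constant term 0 differ by a Puiseux series of order 1/2, so m = 1/2 and τ = ⌊2·(1/2)⌋ = 1. -/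
open Finset Polynomial

noncomputable section

/-!
Write `F = (x - u)(x - v)Q(x)`, where `Q` has integral coefficients and `Q(0)` is a unit, and let
`b₀`, `b₁` be the coefficients of `1` and `x` in `F`. Then `ord (uv) = ord b₀`, and
`ord b₁ ≥ ord b₀` forces `ord (u + v) ≥ ord b₀`. For a family of the first kind `b₀` has order
exactly `1`, since its `t`-coefficient is `B(0)`, and `b₁` has order at least `1`. So `(u + v)²` is
negligible against `4uv` in `(u - v)² = (u + v)² - 4uv`, and `ord (u - v)² = 1`.
-/

section Valuation

variable {R Γ₀ : Type*} [CommRing R] [LinearOrderedAddCommMonoidWithTop Γ₀]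
  (v : AddValuation R Γ₀)

theorem coeff_zero_quadratic_mul (x y : R) (Q : R[X]) :
    ((X - C x) * (X - C y) * Q).coeff 0 = x * y * Q.coeff 0 := by
  simp [mul_coeff_zero]

theorem coeff_one_quadratic_mul (x y : R) (Q : R[X]) :
    ((X - C x) * (X - C y) * Q).coeff 1 = x * y * Q.coeff 1 - (x + y) * Q.coeff 0 := by
  have expand : (X - C x) * (X - C y) * Q =
      C (x * y) * Q - C (x + y) * (X * Q) + X * (X * Q) := by
    simp only [map_add, map_mul]
    ring
  rw [expand, coeff_add, coeff_sub, coeff_C_mul, coeff_C_mul, coeff_X_mul Q 0,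
    coeff_X_mul (X * Q) 0, coeff_X_mul_zero, add_zero]

theorem map_coeff_mul_nonneg {f g : R[X]} (hf : ∀ k, 0 ≤ v (f.coeff k))
    (hg : ∀ k, 0 ≤ v (g.coeff k)) (k : ℕ) : 0 ≤ v ((f * g).coeff k) := by
  rw [coeff_mul]
  refine v.map_le_sum fun i _ => ?_
  rw [v.map_mul]
  exact add_nonneg (hf _) (hg _)

theorem map_coeff_C_nonneg {x : R} (hx : 0 ≤ v x) (k : ℕ) : 0 ≤ v ((C x).coeff k) := by
  rw [coeff_C]
  split_ifs <;> simp [hx]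

theorem map_coeff_X_sub_C_nonneg {x : R} (hx : 0 ≤ v x) (k : ℕ) :
    0 ≤ v ((X - C x).coeff k) := by
  rw [coeff_sub]
  refine v.map_le_sub ?_ (map_coeff_C_nonneg v hx k)
  rw [coeff_X]
  split_ifs <;> simp

theorem map_coeff_prod_X_sub_C_nonneg {ι : Type*} (s : Finset ι) {r : ι → R}
    (hr : ∀ i ∈ s, 0 ≤ v (r i)) (k : ℕ) : 0 ≤ v ((∏ i ∈ s, (X - C (r i))).coeff k) :=
  Finset.prod_induction (fun i => X - C (r i)) (fun f => ∀ k, 0 ≤ v (f.coeff k))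
    (fun _ _ => map_coeff_mul_nonneg v) (fun k => map_coeff_C_nonneg v (by simp) k)
    (fun i hi => map_coeff_X_sub_C_nonneg v (hr i hi)) k

theorem map_coeff_zero_prod_X_sub_C {ι : Type*} (s : Finset ι) (r : ι → R) :
    v ((∏ i ∈ s, (X - C (r i))).coeff 0) = ∑ i ∈ s, v (r i) := by
  classical
  induction s using Finset.induction_on with
  | empty => simp
  | insert i s hi ih => simp [Finset.prod_insert hi, Finset.sum_insert hi, mul_coeff_zero, ih]

theorem map_sub_sq_eq_map_mul {x y : R} (h4 : v 4 = 0) (h : v (x * y) < 2 • v (x + y)) :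
    v ((x - y) ^ 2) = v (x * y) := by
  have h4mul : v (4 * (x * y)) = v (x * y) := by rw [v.map_mul, h4, zero_add]
  have identity : (x - y) ^ 2 = (x + y) ^ 2 - 4 * (x * y) := by ring
  rw [identity, v.map_sub_eq_of_lt_right, h4mul]
  rwa [h4mul, v.map_pow]

theorem map_mul_le_map_add_of_quadratic_mul {x y : R} {Q : R[X]} (hQ₀ : v (Q.coeff 0) = 0)
    (hQ₁ : 0 ≤ v (Q.coeff 1))
    (h : v (x * y) ≤ v (((X - C x) * (X - C y) * Q).coeff 1)) :
    v (x * y) ≤ v (x + y) := by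
  have hxyQ₁ : v (x * y) ≤ v (x * y * Q.coeff 1) := by
    rw [v.map_mul (x * y)]
    exact le_add_of_nonneg_right hQ₁
  have key := v.map_le_sub hxyQ₁ h
  rwa [coeff_one_quadratic_mul, sub_sub_cancel, v.map_mul (x + y), hQ₀, add_zero] at key

theorem two_nsmul_map_sub_eq_map_coeff_zero (h4 : v 4 = 0) {x y : R} {Q F : R[X]}
    (hQ₀ : v (Q.coeff 0) = 0) (hQ₁ : 0 ≤ v (Q.coeff 1)) (hF : F = (X - C x) * (X - C y) * Q)
    (hpos : 0 < v (F.coeff 0)) (htop : v (F.coeff 0) ≠ ⊤) (hle : v (F.coeff 0) ≤ v (F.coeff 1)) :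
    2 • v (x - y) = v (F.coeff 0) := by
  have hmul : v (x * y) = v (F.coeff 0) := by
    rw [hF, coeff_zero_quadratic_mul, v.map_mul (x * y), hQ₀, add_zero]
  have hadd : v (x * y) ≤ v (x + y) :=
    map_mul_le_map_add_of_quadratic_mul v hQ₀ hQ₁ (by rwa [hmul, ← hF])
  have hlt : v (x * y) < 2 • v (x + y) :=
    calc v (x * y) < v (x * y) + v (x * y) := by
          rw [hmul]
          simpa only [add_zero] using add_right_strictMono_of_ne_top htop hpos
      _ ≤ 2 • v (x + y) := by rw [two_nsmul]; gcongr
  rw [← v.map_pow, map_sub_sq_eq_map_mul v h4 hlt, hmul]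

end Valuation

section HahnSeries

variable {Γ R L : Type*} [AddCommGroup Γ] [LinearOrder Γ] [IsOrderedAddMonoid Γ]
  [CommRing R] [IsDomain R] [Field L]

theorem addVal_C {a : R} (ha : a ≠ 0) : HahnSeries.addVal Γ R (HahnSeries.C a) = 0 := by
  rw [HahnSeries.addVal_apply, HahnSeries.C_apply, HahnSeries.orderTop_single ha, WithTop.coe_zero]

theorem nsmul_order_eq_of_nsmul_addVal_eq {s : HahnSeries Γ R} {n : ℕ} (hn : n ≠ 0) {g : Γ}
    (hs : n • HahnSeries.addVal Γ R s = g) : n • s.order = g := by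
  have hne : s ≠ 0 := by
    rintro rfl
    rw [← AddValuation.map_pow, zero_pow hn, AddValuation.map_zero] at hs
    exact WithTop.top_ne_coe hs
  rw [HahnSeries.addVal_apply, ← HahnSeries.order_eq_orderTop_of_ne_zero hne] at hs
  exact_mod_cast hs

theorem HasConst.addVal_nonneg {s : HahnSeries ℚ L} {a : L} (h : HasConst s a) :
    0 ≤ HahnSeries.addVal ℚ L s := by
  rw [HahnSeries.addVal_apply, HahnSeries.le_orderTop_iff_forall]
  exact fun q hq => h.2 q (by exact_mod_cast hq)

theorem HasConst.addVal_eq_zero {s : HahnSeries ℚ L} {a : L} (h : HasConst s a) (ha : a ≠ 0) :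
    HahnSeries.addVal ℚ L s = 0 :=
  le_antisymm (HahnSeries.orderTop_le_of_coeff_ne_zero (h.1 ▸ ha)) h.addVal_nonneg

end HahnSeries

section Family

variable {A L : Type*} [CommRing A] [Field L] (φ : A →+* L)

theorem le_addVal_Phi_of_X_pow_dvd {f : PowerSeries A} {n : ℕ} (h : PowerSeries.X ^ n ∣ f) :
    n ≤ HahnSeries.addVal ℚ L (Phi φ f) := by
  rw [HahnSeries.addVal_apply, HahnSeries.le_orderTop_iff_forall]
  intro q hq
  rw [Phi, RingHom.comp_apply]
  by_cases hq_nat : q ∈ Set.range (Nat.cast : ℕ → ℚ)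
  · obtain ⟨m, rfl⟩ := hq_nat
    have hm : m < n := by exact_mod_cast hq
    rw [HahnSeries.ofPowerSeries_apply_coeff, PowerSeries.coeff_map,
      PowerSeries.X_pow_dvd_iff.mp h m hm, map_zero]
  · exact HahnSeries.embDomain_of_notMem_range hq_nat

theorem addVal_Phi_le_of_coeff_ne_zero {f : PowerSeries A} {n : ℕ}
    (h : φ (PowerSeries.coeff n f) ≠ 0) : HahnSeries.addVal ℚ L (Phi φ f) ≤ n := by
  refine HahnSeries.orderTop_le_of_coeff_ne_zero (g := (n : ℚ)) ?_
  rwa [Phi, RingHom.comp_apply, HahnSeries.ofPowerSeries_apply_coeff, PowerSeries.coeff_map]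

theorem addVal_Phi_eq {f : PowerSeries A} {n : ℕ} (hdvd : PowerSeries.X ^ n ∣ f)
    (hcoeff : φ (PowerSeries.coeff n f) ≠ 0) : HahnSeries.addVal ℚ L (Phi φ f) = n :=
  le_antisymm (addVal_Phi_le_of_coeff_ne_zero φ hcoeff) (le_addVal_Phi_of_X_pow_dvd φ hdvd)

theorem coeff_coeff_fam (N : ℕ) (p : ℕ → A[X]) (i j : ℕ) :
    PowerSeries.coeff i ((fam N p).coeff j) = if j ≤ N then (p i).coeff j else 0 := by
  simp only [fam, finsetSum_coeff, coeff_C_mul_X_pow, Finset.sum_ite_eq, Finset.mem_range,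
    Nat.lt_succ_iff]
  split_ifs <;> simp

theorem X_dvd_coeff_fam (N : ℕ) {p : ℕ → A[X]} {j : ℕ} (h : (p 0).coeff j = 0) :
    PowerSeries.X ∣ (fam N p).coeff j := by
  rw [PowerSeries.X_dvd_iff, ← PowerSeries.coeff_zero_eq_constantCoeff_apply, coeff_coeff_fam, h,
    ite_self]

theorem natDegree_fam_le (N : ℕ) (p : ℕ → A[X]) : (fam N p).natDegree ≤ N :=
  natDegree_le_iff_coeff_eq_zero.mpr fun j hj => by
    ext i
    rw [coeff_coeff_fam, if_neg hj.not_ge, map_zero]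

theorem addVal_leadingCoeff_map_fam {N : ℕ} {p : ℕ → A[X]} (h : φ ((p 0).coeff N) ≠ 0) :
    HahnSeries.addVal ℚ L ((fam N p).map (Phi φ)).leadingCoeff = 0 := by
  have hval : HahnSeries.addVal ℚ L (((fam N p).map (Phi φ)).coeff N) = 0 := by
    rw [coeff_map, addVal_Phi_eq φ (n := 0) (by simp) (by simpa [coeff_coeff_fam] using h),
      Nat.cast_zero]
  have hne : ((fam N p).map (Phi φ)).coeff N ≠ 0 := by
    intro h0
    simp [h0] at hval
  have hdeg : ((fam N p).map (Phi φ)).natDegree = N :=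
    natDegree_eq_of_le_of_coeff_ne_zero (natDegree_map_le.trans (natDegree_fam_le N p)) hne
  rw [leadingCoeff, hdeg, hval]

theorem addVal_coeff_zero_map_fam {N : ℕ} {p : ℕ → A[X]} (h₀ : (p 0).coeff 0 = 0)
    (h₁ : φ ((p 1).coeff 0) ≠ 0) :
    HahnSeries.addVal ℚ L (((fam N p).map (Phi φ)).coeff 0) = 1 := by
  rw [coeff_map, addVal_Phi_eq φ (n := 1) (by simpa using X_dvd_coeff_fam N h₀)
    (by simpa [coeff_coeff_fam] using h₁), Nat.cast_one]

theorem one_le_addVal_coeff_map_fam {N : ℕ} {p : ℕ → A[X]} {j : ℕ} (h : (p 0).coeff j = 0) :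
    1 ≤ HahnSeries.addVal ℚ L (((fam N p).map (Phi φ)).coeff j) := by
  rw [coeff_map, ← Nat.cast_one]
  exact le_addVal_Phi_of_X_pow_dvd φ (by simpa using X_dvd_coeff_fam N h)

theorem stmt11_general [NeZero (2 : L)] {ι : Type*} [Fintype ι] {N : ℕ} {p : ℕ → A[X]}
    (hX : X ^ 2 ∣ p 0) (hlead : φ ((p 0).coeff N) ≠ 0) (hB : φ ((p 1).eval 0) ≠ 0)
    {a : ι → L} (ha : ∀ i, a i ≠ 0) {u v c : HahnSeries ℚ L} {r : ι → HahnSeries ℚ L}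
    (hr : ∀ i, HasConst (r i) (a i))
    (hsplit : (fam N p).map (Phi φ) = C c * ((X - C u) * (X - C v) * ∏ i, (X - C (r i)))) :
    (u - v).order = 1 / 2 := by
  set w := HahnSeries.addVal ℚ L
  have hcoeff : ∀ j < 2, (p 0).coeff j = 0 := X_pow_dvd_iff.mp hX
  have hc : w c = 0 := by
    have hmonic : ((X - C u) * (X - C v) * ∏ i, (X - C (r i))).Monic :=
      ((monic_X_sub_C u).mul (monic_X_sub_C v)).mul (monic_prod_X_sub_C r _)
    have hw := addVal_leadingCoeff_map_fam φ hlead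
    rwa [hsplit, leadingCoeff_mul_monic hmonic, leadingCoeff_C] at hw
  have hF₀ : w (((fam N p).map (Phi φ)).coeff 0) = 1 :=
    addVal_coeff_zero_map_fam φ (hcoeff 0 (by simp)) (by rwa [coeff_zero_eq_eval_zero])
  have hF₁ : 1 ≤ w (((fam N p).map (Phi φ)).coeff 1) :=
    one_le_addVal_coeff_map_fam φ (hcoeff 1 (by simp))
  have hQ₀ : w ((C c * ∏ i, (X - C (r i))).coeff 0) = 0 := by
    rw [coeff_C_mul, w.map_mul, map_coeff_zero_prod_X_sub_C, hc, zero_add]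
    exact Finset.sum_eq_zero fun i _ => (hr i).addVal_eq_zero (ha i)
  have hQ₁ : 0 ≤ w ((C c * ∏ i, (X - C (r i))).coeff 1) :=
    map_coeff_mul_nonneg w (map_coeff_C_nonneg w hc.ge)
      (map_coeff_prod_X_sub_C_nonneg w _ fun i _ => (hr i).addVal_nonneg) 1
  have h4 : w 4 = 0 := by
    have h4L : (4 : L) ≠ 0 := by
      simpa [show (4 : L) = 2 * 2 by norm_num] using NeZero.ne (2 : L)
    simpa only [map_ofNat] using addVal_C (Γ := ℚ) h4L
  have hw : 2 • w (u - v) = 1 := by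
    rw [two_nsmul_map_sub_eq_map_coeff_zero w h4 hQ₀ hQ₁ (hsplit.trans (by ring))
      (by rw [hF₀]; exact one_pos) (by rw [hF₀]; exact WithTop.one_ne_top)
      (hF₀.trans_le hF₁), hF₀]
  have horder : 2 • (u - v).order = 1 := nsmul_order_eq_of_nsmul_addVal_eq two_ne_zero hw
  rw [two_nsmul] at horder
  linarith

end Family

/-- **Proposition 4.3.**  For a family of the first kind
`F(x,t) = x² A_{n−2}(x) + B_n(x) t + O(t²)` with `A_{n−2}(0) B_n(0) ≠ 0`, `A_{n−2}`
square-free with pairwise distinct nonzero roots, and `Δ_{A[[t]]}(F) ≠ 0`, the type of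
`F` with respect to the factor `f = x` of `F_0` is `τ = 1`: the two `t`-roots `u, v`
of `F` with constant term `0` satisfy `ord(u − v) = 1/2`, so `m = 1/2` and
`τ = ⌊2 · (1/2)⌋ = 1`. -/
theorem stmt11 {A L : Type*} [CommRing A] [IsDomain A]
    [Field L] [IsAlgClosed L] [CharZero L]
    (φ : A →+* L) (hφ : Function.Injective φ)
    (N : ℕ) (hN : 2 ≤ N)
    (Aq Bq : Polynomial A) (hAmonic : Aq.Monic) (hAdeg : Aq.natDegree = N - 2)
    (hBdeg : Bq.natDegree ≤ N) (hsqfree : Squarefree Aq)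
    (hAB : Aq.eval 0 * Bq.eval 0 ≠ 0)
    (p : ℕ → Polynomial A) (hdeg : ∀ i, (p i).natDegree ≤ N)
    (hp0 : p 0 = X ^ 2 * Aq) (hp1 : p 1 = Bq)
    (aA : Fin (N - 2) → L) (haInj : Function.Injective aA) (haNe : ∀ i, aA i ≠ 0)
    (hAfac : Aq.map φ = ∏ i, (X - C (aA i)))
    (u v : HahnSeries ℚ L) (hu : HasConst u 0) (hv : HasConst v 0)
    (r : Fin (N - 2) → HahnSeries ℚ L) (hr : ∀ i, HasConst (r i) (aA i))
    (c : HahnSeries ℚ L)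
    (hsplit : (fam N p).map (Phi φ) =
      C c * ((X - C u) * (X - C v) * ∏ i, (X - C (r i))))
    (hΔ : rootsSep (Sum.elim ![u, v] r) ≠ 0) :
    (u - v).order = 1 / 2 ∧ ⌊(2 : ℚ) * (u - v).order⌋ = 1 := by
  have hlead : (p 0).coeff N = 1 := by
    have h := ((monic_X_pow 2).mul hAmonic).coeff_natDegree
    rwa [(monic_X_pow 2).natDegree_mul hAmonic, natDegree_X_pow, hAdeg,
      Nat.add_sub_cancel' hN, ← hp0] at h
  have horder : (u - v).order = 1 / 2 :=
    stmt11_general φ (hp0 ▸ dvd_mul_right _ _) (by simp [hlead])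
      ((map_ne_zero_iff φ hφ).mpr (hp1 ▸ right_ne_zero_of_mul hAB)) haNe hr hsplit
  exact ⟨horder, by norm_num [horder]⟩
end
end

section
/- Let F(x,t) = x² A_{n−2}(x) + 2x B_{n−1}(x) t + C_n(x) t² + O(t³) be a family of polynomials of the second kind, where A_{n−2}(0)·(B_{n−1}(0)² − A_{n−2}(0)·C_n(0)) ≠ 0, A_{n−2} is square-free with pairwise distinct nonzero roots, and Δ_{A[[t]]}(F) ≠ 0. Then the type of F with respect to the factor f = x of F_0 = x² A_{n−2}(x) is τ = 2; more precisely, the two t-roots of F with constant term 0 differ by a Puiseux series of order 1, so m = 1 and τ = ⌊2·1⌋ = 2. -/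
open Finset Polynomial

noncomputable section

/-!
Write `F = (x - u)(x - v)P`. Dividing by a monic polynomial does not leave the ring of Puiseux
series of nonnegative order, so `P` has coefficients in it, and comparing the coefficients of
`x²`, `1` and `x` gives in turn
`P(0) = A(0) + ⋯`, `uv = (C(0) / A(0)) t² + ⋯` and `u + v = -(2B(0) / A(0)) t + ⋯`.
Hence `(u - v)² = (u + v)² - 4uv = 4 (B(0)² - A(0)C(0)) / A(0)² · t² + ⋯`, whose leading
coefficient does not vanish, so that `u - v` has order `1`.
-/

section Polynomial

lemma mem_lifts_of_monic_mul_mem_lifts {R S : Type*} [CommRing R] [CommRing S] {f : R →+* S}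
    {D P : S[X]} (hD : D.Monic) (hDf : D ∈ lifts f) (hDP : D * P ∈ lifts f) : P ∈ lifts f := by
  obtain ⟨D', rfl, -, hD'⟩ := lifts_and_natDegree_eq_and_monic hDf hD
  obtain ⟨Q, hQ⟩ := (mem_lifts _).1 hDP
  refine (mem_lifts _).2 ⟨Q /ₘ D', ?_⟩
  rw [map_divByMonic f hD', hQ, mul_divByMonic_cancel_left P hD]

variable {R : Type*} [CommRing R] (u v : R) (P : R[X])

lemma X_sub_C_mul_X_sub_C_mul :
    (X - C u) * (X - C v) * P = P * X ^ 2 - C (u + v) * (P * X) + C (u * v) * P := by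
  simp only [C_add, C_mul]
  ring

lemma coeff_zero_X_sub_C_mul_X_sub_C_mul :
    ((X - C u) * (X - C v) * P).coeff 0 = P.coeff 0 * (u * v) := by
  simp [mul_comm]

lemma coeff_one_X_sub_C_mul_X_sub_C_mul :
    ((X - C u) * (X - C v) * P).coeff 1 = u * v * P.coeff 1 - P.coeff 0 * (u + v) := by
  rw [X_sub_C_mul_X_sub_C_mul, coeff_add, coeff_sub, coeff_C_mul, coeff_C_mul, coeff_mul_X,
    coeff_mul_X_pow', if_neg (by norm_num)]
  ring

lemma coeff_two_X_sub_C_mul_X_sub_C_mul :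
    ((X - C u) * (X - C v) * P).coeff 2 = P.coeff 0 - (u + v) * P.coeff 1 + u * v * P.coeff 2 := by
  rw [X_sub_C_mul_X_sub_C_mul, coeff_add, coeff_sub, coeff_C_mul, coeff_C_mul, coeff_mul_X,
    coeff_mul_X_pow', if_pos le_rfl]

end Polynomial

section LeadingTerm

open HahnSeries

variable {Γ R : Type*} [LinearOrder Γ] [CommRing R]

lemma add_lt_orderTop_mul [AddCommMonoid Γ] [IsOrderedCancelAddMonoid Γ] {x y : HahnSeries Γ R}
    {g h : Γ} (hx : (g : WithTop Γ) < x.orderTop) (hy : (h : WithTop Γ) ≤ y.orderTop) :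
    ((g + h : Γ) : WithTop Γ) < (x * y).orderTop :=
  (WithTop.add_lt_add_of_lt_of_le WithTop.coe_ne_top hx hy).trans_le orderTop_add_le_mul

/-- `x = a t^g + (terms of order > g)`. The coefficient `a` is allowed to vanish, in which case
this says that `x` has order greater than `g`. -/
def HasLeadingTerm (x : HahnSeries Γ R) (g : Γ) (a : R) : Prop :=
  (g : WithTop Γ) < (x - single g a).orderTop

lemma hasLeadingTerm_zero_iff {x : HahnSeries Γ R} {g : Γ} :
    HasLeadingTerm x g 0 ↔ (g : WithTop Γ) < x.orderTop := by
  simp [HasLeadingTerm]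

lemma hasLeadingTerm_iff_coeff {x : HahnSeries Γ R} {g : Γ} {a : R} :
    HasLeadingTerm x g a ↔ (∀ i < g, x.coeff i = 0) ∧ x.coeff g = a := by
  constructor
  · intro h
    have coeff_eq {i : Γ} (hi : i ≤ g) : x.coeff i = (single g a).coeff i :=
      sub_eq_zero.1 (coeff_eq_zero_of_lt_orderTop ((WithTop.coe_le_coe.2 hi).trans_lt h))
    exact ⟨fun i hi => (coeff_eq hi.le).trans (coeff_single_of_ne hi.ne),
      (coeff_eq le_rfl).trans (coeff_single_same g a)⟩
  · rintro ⟨hlt, rfl⟩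
    refine lt_of_le_of_ne (le_orderTop_iff_forall.2 fun i hi => ?_)
      (orderTop_ne_of_coeff_eq_zero (by simp)).symm
    have hig : i < g := WithTop.coe_lt_coe.1 hi
    simp [hlt i hig, coeff_single_of_ne hig.ne]

namespace HasLeadingTerm

variable {x y : HahnSeries Γ R} {g h : Γ} {a b : R}

lemma le_orderTop (hx : HasLeadingTerm x g a) : (g : WithTop Γ) ≤ x.orderTop :=
  le_orderTop_iff_forall.2 fun i hi =>
    (hasLeadingTerm_iff_coeff.1 hx).1 i (WithTop.coe_lt_coe.1 hi)

lemma orderTop_eq (hx : HasLeadingTerm x g a) (ha : a ≠ 0) : x.orderTop = g :=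
  le_antisymm (orderTop_le_of_coeff_ne_zero (by rwa [(hasLeadingTerm_iff_coeff.1 hx).2]))
    hx.le_orderTop

lemma add (hx : HasLeadingTerm x g a) (hy : HasLeadingTerm y g b) :
    HasLeadingTerm (x + y) g (a + b) := by
  rw [HasLeadingTerm, single_add, add_sub_add_comm]
  exact (lt_min hx hy).trans_le min_orderTop_le_orderTop_add

lemma sub (hx : HasLeadingTerm x g a) (hy : HasLeadingTerm y g b) :
    HasLeadingTerm (x - y) g (a - b) := by
  rw [HasLeadingTerm, single_sub, sub_sub_sub_comm]
  exact (lt_min hx hy).trans_le min_orderTop_le_orderTop_sub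

variable [AddCommMonoid Γ] [IsOrderedCancelAddMonoid Γ]

lemma mul (hx : HasLeadingTerm x g a) (hy : HasLeadingTerm y h b) :
    HasLeadingTerm (x * y) (g + h) (a * b) := by
  have split : x * y - single (g + h) (a * b) =
      (x - single g a) * y + (y - single h b) * single g a := by
    rw [← single_mul_single]
    ring
  rw [HasLeadingTerm, split]
  refine (lt_min ?_ ?_).trans_le min_orderTop_le_orderTop_add
  · exact add_lt_orderTop_mul hx hy.le_orderTop
  · rw [add_comm g h]
    exact add_lt_orderTop_mul hy orderTop_single_le

lemma of_mul_left {L : Type*} [Field L] {x y : HahnSeries Γ L} {a b : L}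
    (hx : HasLeadingTerm x g a) (ha : a ≠ 0) (hxy : HasLeadingTerm (x * y) (g + h) b) :
    HasLeadingTerm y h (b / a) := by
  have split : x * (y - single h (b / a)) =
      (x * y - single (g + h) b) - (x - single g a) * single h (b / a) := by
    rw [mul_sub, sub_mul, single_mul_single, mul_div_cancel₀ b ha]
    ring
  have lt_mul : ((g + h : Γ) : WithTop Γ) < (x * (y - single h (b / a))).orderTop := by
    rw [split]
    exact (lt_min hxy (add_lt_orderTop_mul hx orderTop_single_le)).trans_le
      min_orderTop_le_orderTop_sub
  rwa [orderTop_mul, hx.orderTop_eq ha, WithTop.coe_add,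
    WithTop.add_lt_add_iff_left WithTop.coe_ne_top] at lt_mul

end HasLeadingTerm

lemma hasLeadingTerm_ofPowerSeries [Semiring Γ] [IsStrictOrderedRing Γ] {f : PowerSeries R} {n : ℕ}
    (hf : ∀ m < n, PowerSeries.coeff m f = 0) :
    HasLeadingTerm (ofPowerSeries Γ R f) (n : Γ) (PowerSeries.coeff n f) := by
  refine hasLeadingTerm_iff_coeff.2 ⟨fun i hi => ?_, ofPowerSeries_apply_coeff f n⟩
  by_cases hnat : i ∈ Set.range (Nat.castOrderEmbedding (α := Γ))
  · obtain ⟨m, rfl⟩ := hnat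
    exact (ofPowerSeries_apply_coeff f m).trans (hf m (Nat.cast_lt.1 hi))
  · rw [ofPowerSeries_apply]
    exact embDomain_of_notMem_range hnat

end LeadingTerm

section QuadraticFactor

variable {Γ R : Type*} [LinearOrder Γ] [AddCommMonoid Γ] [IsOrderedCancelAddMonoid Γ] [CommRing R]

variable (Γ R) in
/-- The ring of Hahn series of nonnegative order, i.e. of those having a value at `t = 0`. -/
def nonnegOrderSubring : Subring (HahnSeries Γ R) where
  carrier := {x | 0 ≤ x.orderTop}
  mul_mem' {x y} (hx : 0 ≤ x.orderTop) (hy : 0 ≤ y.orderTop) :=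
    (add_nonneg hx hy).trans HahnSeries.orderTop_add_le_mul
  one_mem' := HahnSeries.orderTop_single_le
  add_mem' {x y} (hx : 0 ≤ x.orderTop) (hy : 0 ≤ y.orderTop) :=
    (le_min hx hy).trans HahnSeries.min_orderTop_le_orderTop_add
  zero_mem' := by simp
  neg_mem' hx := by simpa using hx

lemma mem_nonnegOrderSubring {x : HahnSeries Γ R} :
    x ∈ nonnegOrderSubring Γ R ↔ 0 ≤ x.orderTop :=
  Iff.rfl

lemma mem_lifts_nonnegOrderSubring_iff {F : (HahnSeries Γ R)[X]} :
    F ∈ lifts (nonnegOrderSubring Γ R).subtype ↔ ∀ n, 0 ≤ (F.coeff n).orderTop := by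
  simp [lifts_iff_coeff_lifts, mem_nonnegOrderSubring]

lemma X_sub_C_mem_lifts_nonnegOrderSubring {u : HahnSeries Γ R} (hu : 0 ≤ u.orderTop) :
    X - C u ∈ lifts (nonnegOrderSubring Γ R).subtype :=
  (mem_lifts _).2 ⟨X - C ⟨u, hu⟩, by simp⟩

lemma orderTop_coeff_nonneg_of_X_sub_C_mul_X_sub_C_mul {u v : HahnSeries Γ R}
    {P : (HahnSeries Γ R)[X]} (hu : 0 ≤ u.orderTop) (hv : 0 ≤ v.orderTop)
    (hF : ∀ n, 0 ≤ (((X - C u) * (X - C v) * P).coeff n).orderTop) (n : ℕ) :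
    0 ≤ (P.coeff n).orderTop := by
  have hD : (X - C u) * (X - C v) ∈ lifts (nonnegOrderSubring Γ R).subtype :=
    mul_mem (X_sub_C_mem_lifts_nonnegOrderSubring hu) (X_sub_C_mem_lifts_nonnegOrderSubring hv)
  have hP : P ∈ lifts (nonnegOrderSubring Γ R).subtype :=
    mem_lifts_of_monic_mul_mem_lifts ((monic_X_sub_C u).mul (monic_X_sub_C v)) hD
      (mem_lifts_nonnegOrderSubring_iff.2 hF)
  exact mem_lifts_nonnegOrderSubring_iff.1 hP n

lemma hasLeadingTerm_sub_mul_self {u v : HahnSeries Γ R} {g : Γ} {a b : R}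
    (hsum : HasLeadingTerm (u + v) g a) (hprod : HasLeadingTerm (u * v) (g + g) b) :
    HasLeadingTerm ((u - v) * (u - v)) (g + g) (a ^ 2 - 4 * b) := by
  have hfour := (hprod.add hprod).add (hprod.add hprod)
  convert (hsum.mul hsum).sub hfour using 1 <;> ring

lemma hasLeadingTerm_coeff_zero_of_coeff_two {u v : HahnSeries Γ R} {P : (HahnSeries Γ R)[X]}
    {α : R} (hu : 0 < u.orderTop) (hv : 0 < v.orderTop) (hP : ∀ n, 0 ≤ (P.coeff n).orderTop)
    (hF : HasLeadingTerm (((X - C u) * (X - C v) * P).coeff 2) 0 α) :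
    HasLeadingTerm (P.coeff 0) 0 α := by
  have hsum : HasLeadingTerm ((u + v) * P.coeff 1) 0 0 := by
    have huv : 0 < (u + v).orderTop :=
      (lt_min hu hv).trans_le HahnSeries.min_orderTop_le_orderTop_add
    simpa [hasLeadingTerm_zero_iff] using add_lt_orderTop_mul huv (hP 1)
  have hprod : HasLeadingTerm (u * v * P.coeff 2) 0 0 := by
    have huv : 0 < (u * v).orderTop := by simpa using add_lt_orderTop_mul hu hv.le
    simpa [hasLeadingTerm_zero_iff] using add_lt_orderTop_mul huv (hP 2)
  have h := (hF.add hsum).sub hprod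
  rw [coeff_two_X_sub_C_mul_X_sub_C_mul, add_zero, sub_zero] at h
  convert h using 1
  ring

variable {L : Type*} [Field L] {u v : HahnSeries Γ L} {P : (HahnSeries Γ L)[X]} {g : Γ} {α b γ : L}

lemma hasLeadingTerm_mul_of_coeff_zero (hα : α ≠ 0) (hP0 : HasLeadingTerm (P.coeff 0) 0 α)
    (hF : HasLeadingTerm (((X - C u) * (X - C v) * P).coeff 0) g γ) :
    HasLeadingTerm (u * v) g (γ / α) := by
  rw [coeff_zero_X_sub_C_mul_X_sub_C_mul, ← zero_add g] at hF
  exact hP0.of_mul_left hα hF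

lemma hasLeadingTerm_add_of_coeff_one (hα : α ≠ 0) (hP0 : HasLeadingTerm (P.coeff 0) 0 α)
    (hP1 : 0 ≤ (P.coeff 1).orderTop) (huv : (g : WithTop Γ) < (u * v).orderTop)
    (hF : HasLeadingTerm (((X - C u) * (X - C v) * P).coeff 1) g b) :
    HasLeadingTerm (u + v) g (-b / α) := by
  have hprod : HasLeadingTerm (u * v * P.coeff 1) g 0 := by
    simpa [hasLeadingTerm_zero_iff] using add_lt_orderTop_mul huv hP1
  have h := hprod.sub hF
  rw [coeff_one_X_sub_C_mul_X_sub_C_mul, sub_sub_cancel, zero_sub, ← zero_add g] at h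
  exact hP0.of_mul_left hα h

end QuadraticFactor

lemma orderTop_eq_of_orderTop_mul_self {Γ R : Type*} [LinearOrder Γ] [AddCommMonoid Γ]
    [IsOrderedCancelAddMonoid Γ] [CommRing R] [NoZeroDivisors R] {x : HahnSeries Γ R} {g : Γ}
    (h : (x * x).orderTop = (g + g : Γ)) : x.orderTop = g := by
  rw [HahnSeries.orderTop_mul] at h
  cases hx : x.orderTop with
  | top =>
    rw [hx, WithTop.top_add] at h
    exact absurd h WithTop.top_ne_coe
  | coe k =>
    rw [hx, ← WithTop.coe_add, WithTop.coe_inj] at h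
    exact congrArg _ ((strictMono_id.add strictMono_id).injective h)

theorem order_sub_eq_of_discrim_ne_zero {Γ L : Type*} [LinearOrder Γ] [AddCommMonoid Γ]
    [IsOrderedCancelAddMonoid Γ] [Field L] {F : (HahnSeries Γ L)[X]} {u v : HahnSeries Γ L}
    {g : Γ} {α b γ : L} (hF : ∀ n, 0 ≤ (F.coeff n).orderTop) (hu : 0 < u.orderTop)
    (hv : 0 < v.orderTop) (hdvd : (X - C u) * (X - C v) ∣ F) (hg : 0 < g)
    (h0 : HasLeadingTerm (F.coeff 0) (g + g) γ) (h1 : HasLeadingTerm (F.coeff 1) g b)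
    (h2 : HasLeadingTerm (F.coeff 2) 0 α) (hα : α ≠ 0) (hdisc : discrim α b γ ≠ 0) :
    (u - v).order = g := by
  obtain ⟨P, rfl⟩ := hdvd
  have hP : ∀ n, 0 ≤ (P.coeff n).orderTop :=
    orderTop_coeff_nonneg_of_X_sub_C_mul_X_sub_C_mul hu.le hv.le hF
  have hP0 : HasLeadingTerm (P.coeff 0) 0 α := hasLeadingTerm_coeff_zero_of_coeff_two hu hv hP h2
  have hprod : HasLeadingTerm (u * v) (g + g) (γ / α) := hasLeadingTerm_mul_of_coeff_zero hα hP0 h0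
  have hlt : (g : WithTop Γ) < (u * v).orderTop :=
    (WithTop.coe_lt_coe.2 (lt_add_of_pos_left g hg)).trans_le hprod.le_orderTop
  have hsum : HasLeadingTerm (u + v) g (-b / α) :=
    hasLeadingTerm_add_of_coeff_one hα hP0 (hP 1) hlt h1
  have hsq : HasLeadingTerm ((u - v) * (u - v)) (g + g) (discrim α b γ / α ^ 2) := by
    convert hasLeadingTerm_sub_mul_self hsum hprod using 1
    rw [discrim]
    field_simp
  have horder : (u - v).orderTop = g :=
    orderTop_eq_of_orderTop_mul_self (hsq.orderTop_eq (div_ne_zero hdisc (pow_ne_zero 2 hα)))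
  have hne : u - v ≠ 0 := HahnSeries.orderTop_ne_top.1 (horder ▸ WithTop.coe_ne_top)
  exact WithTop.coe_injective ((HahnSeries.order_eq_orderTop_of_ne_zero hne).trans horder)

section Family

variable {A L : Type*} [CommRing A] [Field L]

lemma HasConst.orderTop_pos {s : HahnSeries ℚ L} (hs : HasConst s 0) : 0 < s.orderTop :=
  hasLeadingTerm_zero_iff.1 (hasLeadingTerm_iff_coeff.2 ⟨hs.2, hs.1⟩)

lemma orderTop_Phi_nonneg (φ : A →+* L) (f : PowerSeries A) : 0 ≤ (Phi φ f).orderTop := by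
  have h := hasLeadingTerm_ofPowerSeries (Γ := ℚ) (f := PowerSeries.map φ f) (n := 0) (by simp)
  simpa [Phi] using h.le_orderTop

lemma coeff_fam {N : ℕ} (p : ℕ → A[X]) {j : ℕ} (hj : j ≤ N) :
    (fam N p).coeff j = PowerSeries.mk fun i => (p i).coeff j := by
  simp [fam, finsetSum_coeff, hj]

lemma hasLeadingTerm_coeff_map_fam (φ : A →+* L) {N : ℕ} (p : ℕ → A[X])
    {j n : ℕ} (hj : j ≤ N) (hp : ∀ m < n, (p m).coeff j = 0) :
    HasLeadingTerm (((fam N p).map (Phi φ)).coeff j) n (φ ((p n).coeff j)) := by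
  have h := hasLeadingTerm_ofPowerSeries (Γ := ℚ) (n := n)
    (f := PowerSeries.map φ (PowerSeries.mk fun i => (p i).coeff j))
    fun m hm => by simp [hp m hm]
  simpa [coeff_map, coeff_fam p hj, Phi] using h

end Family

theorem stmt12_general {A L : Type*} [CommRing A] [Field L] [NeZero (2 : L)] (φ : A →+* L)
    {N : ℕ} (hN : 2 ≤ N) (Aq Bq Cq : A[X])
    (hABC : φ (Aq.eval 0 * (Bq.eval 0 ^ 2 - Aq.eval 0 * Cq.eval 0)) ≠ 0)
    (p : ℕ → A[X]) (hp0 : p 0 = X ^ 2 * Aq) (hp1 : p 1 = 2 * X * Bq) (hp2 : p 2 = Cq)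
    (u v : HahnSeries ℚ L) (hu : HasConst u 0) (hv : HasConst v 0)
    (hdvd : (X - C u) * (X - C v) ∣ (fam N p).map (Phi φ)) :
    (u - v).order = 1 ∧ ⌊(2 : ℚ) * (u - v).order⌋ = 2 := by
  have coeff_zero : HasLeadingTerm (((fam N p).map (Phi φ)).coeff 0) (1 + 1) (φ (Cq.eval 0)) := by
    have h := hasLeadingTerm_coeff_map_fam φ p (n := 2) (Nat.zero_le N) fun m hm => by
      interval_cases m <;> simp [hp0, hp1]
    rwa [hp2, coeff_zero_eq_eval_zero Cq, Nat.cast_two, ← one_add_one_eq_two] at h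
  have coeff_one : HasLeadingTerm (((fam N p).map (Phi φ)).coeff 1) 1 (φ (2 * Bq.eval 0)) := by
    have h := hasLeadingTerm_coeff_map_fam φ p (n := 1) (one_le_two.trans hN) fun m hm => by
      simp [Nat.lt_one_iff.1 hm, hp0, coeff_X_pow_mul']
    have hcoeff : (2 * X * Bq).coeff 1 = 2 * Bq.eval 0 := by
      have hX : (X * Bq).coeff 1 = Bq.coeff 0 := coeff_X_mul Bq 0
      rw [mul_assoc, coeff_ofNat_mul, hX, coeff_zero_eq_eval_zero]
    rwa [hp1, hcoeff, Nat.cast_one] at h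
  have coeff_two : HasLeadingTerm (((fam N p).map (Phi φ)).coeff 2) 0 (φ (Aq.eval 0)) := by
    have h := hasLeadingTerm_coeff_map_fam φ p (n := 0) hN (by simp)
    rwa [hp0, coeff_X_pow_mul', if_pos le_rfl, Nat.sub_self, coeff_zero_eq_eval_zero,
      Nat.cast_zero] at h
  have hα : φ (Aq.eval 0) ≠ 0 := left_ne_zero_of_mul (map_mul φ _ _ ▸ hABC)
  have hdisc : discrim (φ (Aq.eval 0)) (φ (2 * Bq.eval 0)) (φ (Cq.eval 0)) ≠ 0 := by
    have h := right_ne_zero_of_mul (map_mul φ _ _ ▸ hABC)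
    convert mul_ne_zero (pow_ne_zero 2 (two_ne_zero (α := L))) h using 1
    simp only [discrim, map_mul, map_sub, map_pow, map_ofNat]
    ring
  have coeff_nonneg (n : ℕ) : 0 ≤ (((fam N p).map (Phi φ)).coeff n).orderTop := by
    rw [coeff_map]
    exact orderTop_Phi_nonneg φ _
  have horder : (u - v).order = 1 :=
    order_sub_eq_of_discrim_ne_zero coeff_nonneg hu.orderTop_pos hv.orderTop_pos hdvd one_pos
      coeff_zero coeff_one coeff_two hα hdisc
  exact ⟨horder, by norm_num [horder]⟩

/-- **Proposition 4.4.**  For a family of the second kind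
`F(x,t) = x² A_{n−2}(x) + 2x B_{n−1}(x) t + C_n(x) t² + O(t³)` with
`A_{n−2}(0)(B_{n−1}(0)² − A_{n−2}(0) C_n(0)) ≠ 0`, `A_{n−2}` square-free with pairwise
distinct nonzero roots, and `Δ_{A[[t]]}(F) ≠ 0`, the type of `F` with respect to the
factor `f = x` of `F_0` is `τ = 2`: the two `t`-roots `u, v` of `F` with constant term
`0` satisfy `ord(u − v) = 1`, so `m = 1` and `τ = ⌊2 · 1⌋ = 2`. -/
theorem stmt12 {A L : Type*} [CommRing A] [IsDomain A]
    [Field L] [IsAlgClosed L] [CharZero L]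
    (φ : A →+* L) (hφ : Function.Injective φ)
    (N : ℕ) (hN : 2 ≤ N)
    (Aq Bq Cq : Polynomial A) (hAmonic : Aq.Monic) (hAdeg : Aq.natDegree = N - 2)
    (hBdeg : Bq.natDegree ≤ N - 1) (hCdeg : Cq.natDegree ≤ N) (hsqfree : Squarefree Aq)
    (hABC : Aq.eval 0 * (Bq.eval 0 ^ 2 - Aq.eval 0 * Cq.eval 0) ≠ 0)
    (p : ℕ → Polynomial A) (hdeg : ∀ i, (p i).natDegree ≤ N)
    (hp0 : p 0 = X ^ 2 * Aq) (hp1 : p 1 = 2 * X * Bq) (hp2 : p 2 = Cq)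
    (aA : Fin (N - 2) → L) (haInj : Function.Injective aA) (haNe : ∀ i, aA i ≠ 0)
    (hAfac : Aq.map φ = ∏ i, (X - C (aA i)))
    (u v : HahnSeries ℚ L) (hu : HasConst u 0) (hv : HasConst v 0)
    (r : Fin (N - 2) → HahnSeries ℚ L) (hr : ∀ i, HasConst (r i) (aA i))
    (c : HahnSeries ℚ L)
    (hsplit : (fam N p).map (Phi φ) =
      C c * ((X - C u) * (X - C v) * ∏ i, (X - C (r i))))
    (hΔ : rootsSep (Sum.elim ![u, v] r) ≠ 0) :
    (u - v).order = 1 ∧ ⌊(2 : ℚ) * (u - v).order⌋ = 2 :=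
  stmt12_general φ hN Aq Bq Cq ((map_ne_zero_iff φ hφ).2 hABC) p hp0 hp1 hp2 u v hu hv
    ⟨C c * ∏ i, (X - C (r i)), by rw [hsplit]; ring⟩
end
end

section
/- Let A = k[y] and let F(x,t) = x³ + x C_2(x) t² + F_3(x) t³ + O(t⁴) be a family of polynomials with C_2, F_3 ∈ A[x] such that x does not divide 4C_2³ + 27F_3², and Δ_{A[[t]]}(F) ≠ 0. Then the general type of F is τ = 3. -/
open Finset Polynomial

noncomputable section

/-! Rescaling `x ↦ t x` turns `F` into `t³ G` with `G(x, 0) = x³ + C₂(0) x + F₃(0)`, so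
`Δ(F) = t⁶ Δ(G)`, and `Δ(G)` has the nonzero constant term `-(4 C₂(0)³ + 27 F₃(0)²)`. The Newton
polygon of `F` shows that every `t`-root has order at least `1`, hence so does each of the six
differences `s i - s j` with `i ≠ j`. As their product is `Δ(F)` up to a unit, it has order exactly
`6`, which forces every difference to have order exactly `1`. -/

section Valuation

variable {R Γ : Type*} [CommRing R] [AddCommGroup Γ] [LinearOrder Γ] [IsOrderedAddMonoid Γ]
  (v : AddValuation R (WithTop Γ)) {m : Γ}

lemma nsmul_lt_sub_nsmul_add_nsmul {a : Γ} (ham : a < m) {j n : ℕ} (hj : j < n) :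
    n • a < (n - j) • m + j • a := by
  calc n • a = (n - j) • a + j • a := by rw [← add_nsmul, Nat.sub_add_cancel hj.le]
    _ < (n - j) • m + j • a := by
      gcongr
      exact Nat.sub_pos_of_lt hj

lemma le_addValuation_of_isRoot {P : R[X]} {s : R} (hs : P.IsRoot s)
    (hlead : v P.leadingCoeff = 0)
    (hcoeff : ∀ j < P.natDegree, (((P.natDegree - j) • m : Γ) : WithTop Γ) ≤ v (P.coeff j)) :
    (m : WithTop Γ) ≤ v s := by
  by_contra! hlt
  obtain ⟨a, ha⟩ := WithTop.ne_top_iff_exists.mp hlt.ne_top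
  have ham : a < m := by rwa [← ha, WithTop.coe_lt_coe] at hlt
  have htop : v (P.leadingCoeff * s ^ P.natDegree) = ((P.natDegree • a : Γ) : WithTop Γ) := by
    rw [v.map_mul, v.map_pow, hlead, zero_add, ← ha, WithTop.coe_nsmul]
  have hlower : ∀ j ∈ range P.natDegree,
      ((P.natDegree • a : Γ) : WithTop Γ) < v (P.coeff j * s ^ j) := by
    intro j hj
    have hj := mem_range.mp hj
    calc ((P.natDegree • a : Γ) : WithTop Γ)
        < (((P.natDegree - j) • m + j • a : Γ) : WithTop Γ) :=
          WithTop.coe_lt_coe.mpr (nsmul_lt_sub_nsmul_add_nsmul ham hj)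
      _ ≤ v (P.coeff j * s ^ j) := by
          rw [v.map_mul, v.map_pow, ← ha, WithTop.coe_add, ← WithTop.coe_nsmul]
          gcongr
          exact hcoeff j hj
  have hcancel : ∑ j ∈ range P.natDegree, P.coeff j * s ^ j =
      -(P.leadingCoeff * s ^ P.natDegree) := by
    rw [eq_neg_iff_add_eq_zero, leadingCoeff, ← sum_range_succ, ← eval_eq_sum_range]
    exact hs
  have hsum := v.map_lt_sum WithTop.coe_ne_top hlower
  rw [hcancel, v.map_neg, htop] at hsum
  exact hsum.false

lemma card_nsmul_le_addValuation_prod {ι : Type*} {T : Finset ι} {f : ι → R}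
    (hf : ∀ q ∈ T, (m : WithTop Γ) ≤ v (f q)) :
    ((#T • m : Γ) : WithTop Γ) ≤ v (∏ q ∈ T, f q) := by
  classical
  induction T using Finset.induction_on with
  | empty => simp
  | insert q T hq ih =>
    rw [prod_insert hq, card_insert_of_notMem hq, v.map_mul, add_comm, add_nsmul, one_nsmul,
      WithTop.coe_add]
    gcongr
    · exact hf q (mem_insert_self q T)
    · exact ih fun r hr => hf r (mem_insert_of_mem hr)

lemma addValuation_eq_of_addValuation_prod_eq {ι : Type*} {T : Finset ι} {f : ι → R}
    (hf : ∀ q ∈ T, (m : WithTop Γ) ≤ v (f q))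
    (hprod : v (∏ q ∈ T, f q) = ((#T • m : Γ) : WithTop Γ)) {q : ι} (hq : q ∈ T) :
    v (f q) = m := by
  classical
  refine le_antisymm ?_ (hf q hq)
  have hrest : (((#(T.erase q)) • m : Γ) : WithTop Γ) ≤ v (∏ r ∈ T.erase q, f r) :=
    card_nsmul_le_addValuation_prod v fun r hr => hf r (mem_of_mem_erase hr)
  refine WithTop.le_of_add_le_add_right (WithTop.coe_ne_top (a := #(T.erase q) • m)) ?_
  calc v (f q) + ((#(T.erase q) • m : Γ) : WithTop Γ)
      ≤ v (f q) + v (∏ r ∈ T.erase q, f r) := by gcongr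
    _ = ((#T • m : Γ) : WithTop Γ) := by rw [← v.map_mul, mul_prod_erase T f hq, hprod]
    _ = m + ((#(T.erase q) • m : Γ) : WithTop Γ) := by
      rw [← WithTop.coe_add, ← succ_nsmul', card_erase_add_one hq]

lemma addValuation_sub_eq_of_addValuation_prod_offDiag_eq {ι : Type*} [Fintype ι]
    {s : ι → R} (hs : ∀ i, (m : WithTop Γ) ≤ v (s i))
    (hprod : v (∏ q ∈ univ.offDiag, (s q.1 - s q.2)) =
      ((#(univ : Finset ι).offDiag • m : Γ) : WithTop Γ)) {i j : ι} (hij : i ≠ j) :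
    v (s i - s j) = m :=
  addValuation_eq_of_addValuation_prod_eq v (f := fun q : ι × ι => s q.1 - s q.2)
    (fun q _ => v.map_le_sub (hs q.1) (hs q.2)) hprod (q := (i, j)) (by simpa using hij)

end Valuation

section CubicDiscriminant

variable {R S : Type*} [CommRing R] [CommRing S]

lemma cubic_discr_map (φ : R →+* S) (P : Cubic R) : (P.map φ).discr = φ P.discr := by
  simp only [Cubic.discr, Cubic.map, map_add, map_sub, map_mul, map_pow, map_ofNat]

lemma cubic_discr_weighted (t a b c d : R) :
    (⟨a, t * b, t ^ 2 * c, t ^ 3 * d⟩ : Cubic R).discr =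
      t ^ 6 * (⟨a, b, c, d⟩ : Cubic R).discr := by
  simp only [Cubic.discr]
  ring

lemma prod_offDiag_fin_three {M : Type*} [CommMonoid M] (f : Fin 3 × Fin 3 → M) :
    ∏ q ∈ univ.offDiag, f q =
      f (0, 1) * f (0, 2) * f (1, 0) * f (1, 2) * f (2, 0) * f (2, 1) := by
  have hoffDiag : (univ : Finset (Fin 3)).offDiag =
      {(0, 1), (0, 2), (1, 0), (1, 2), (2, 0), (2, 1)} := by decide
  rw [hoffDiag]
  simp [mul_assoc]

lemma cubic_eq_of_toPoly_eq_C_mul_prod {P : Cubic R} {c : R} {s : Fin 3 → R}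
    (hP : P.toPoly = C c * ∏ i, (X - C (s i))) :
    P = ⟨c, c * -(s 0 + s 1 + s 2), c * (s 0 * s 1 + s 0 * s 2 + s 1 * s 2),
      c * -(s 0 * s 1 * s 2)⟩ := by
  rwa [Fin.prod_univ_three, ← mul_assoc, ← mul_assoc, Cubic.C_mul_prod_X_sub_C_eq,
    Cubic.toPoly_injective] at hP

lemma cubic_discr_eq_neg_prod_offDiag {P : Cubic R} {c : R} {s : Fin 3 → R}
    (hP : P.toPoly = C c * ∏ i, (X - C (s i))) :
    P.discr = -(P.a ^ 4 * ∏ q ∈ univ.offDiag, (s q.1 - s q.2)) := by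
  rw [cubic_eq_of_toPoly_eq_C_mul_prod hP, prod_offDiag_fin_three]
  simp only [Cubic.discr]
  ring

end CubicDiscriminant

section InitialForm

variable {R S : Type*} [CommRing R] [CommRing S]

/-- The initial form of a cubic `P(x) = a x³ + b x² + c x + d` over `R[[t]]` along the Newton
polygon edge of slope `1`. If `t ∣ b`, `t² ∣ c` and `t³ ∣ d`, it is the value at `t = 0` of
`t⁻³ P(t x)`. -/
def initialForm (P : Cubic (PowerSeries R)) : Cubic R :=
  ⟨PowerSeries.coeff 0 P.a, PowerSeries.coeff 1 P.b, PowerSeries.coeff 2 P.c,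
    PowerSeries.coeff 3 P.d⟩

/-- The Newton polygon of the cubic `a x³ + b x² + c x + d` over `R[[t]]` lies on or above the line
of slope `1` ending at `x³`. -/
structure IsAboveSlopeOne (P : Cubic (PowerSeries R)) : Prop where
  dvd_b : PowerSeries.X ∣ P.b
  dvd_c : PowerSeries.X ^ 2 ∣ P.c
  dvd_d : PowerSeries.X ^ 3 ∣ P.d

lemma initialForm_map (φ : R →+* S) (P : Cubic (PowerSeries R)) :
    initialForm (P.map (PowerSeries.map φ)) = (initialForm P).map φ := by
  simp [initialForm, Cubic.map]

lemma IsAboveSlopeOne.map {P : Cubic (PowerSeries R)} (hP : IsAboveSlopeOne P) (φ : R →+* S) :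
    IsAboveSlopeOne (P.map (PowerSeries.map φ)) where
  dvd_b := by simpa [Cubic.map] using map_dvd (PowerSeries.map φ) hP.dvd_b
  dvd_c := by simpa [Cubic.map] using map_dvd (PowerSeries.map φ) hP.dvd_c
  dvd_d := by simpa [Cubic.map] using map_dvd (PowerSeries.map φ) hP.dvd_d

lemma IsAboveSlopeOne.exists_discr_eq_X_pow_mul {P : Cubic (PowerSeries R)}
    (hP : IsAboveSlopeOne P) :
    ∃ δ : PowerSeries R, P.discr = PowerSeries.X ^ 6 * δ ∧
      PowerSeries.constantCoeff δ = (initialForm P).discr := by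
  obtain ⟨a, b, c, d⟩ := P
  obtain ⟨⟨b, rfl⟩, ⟨c, rfl⟩, ⟨d, rfl⟩⟩ := hP
  refine ⟨_, cubic_discr_weighted PowerSeries.X a b c d, ?_⟩
  rw [← cubic_discr_map]
  congr 1
  simp [initialForm, Cubic.map, PowerSeries.coeff_X_pow_mul']

end InitialForm

section HahnSeries

variable {Γ R : Type*} [Ring Γ] [LinearOrder Γ] [IsStrictOrderedRing Γ] [CommRing R]

lemma zero_le_orderTop_ofPowerSeries (f : PowerSeries R) :
    0 ≤ (HahnSeries.ofPowerSeries Γ R f).orderTop := by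
  refine HahnSeries.le_orderTop_iff_forall.mpr fun q hq => ?_
  rw [HahnSeries.ofPowerSeries_apply]
  refine HahnSeries.embDomain_of_notMem_range ?_
  rintro ⟨n, rfl⟩
  exact (WithTop.coe_lt_coe.mp hq).not_ge n.cast_nonneg

lemma orderTop_ofPowerSeries_eq_zero {f : PowerSeries R}
    (hf : PowerSeries.constantCoeff f ≠ 0) :
    (HahnSeries.ofPowerSeries Γ R f).orderTop = 0 := by
  refine le_antisymm (HahnSeries.orderTop_le_of_coeff_ne_zero (g := (0 : Γ)) ?_)
    (zero_le_orderTop_ofPowerSeries f)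
  have hcoeff := HahnSeries.ofPowerSeries_apply_coeff (Γ := Γ) f 0
  rw [Nat.cast_zero] at hcoeff
  rwa [hcoeff, PowerSeries.coeff_zero_eq_constantCoeff_apply]

variable [IsDomain R]

lemma orderTop_ofPowerSeries_X_pow_mul (n : ℕ) (f : PowerSeries R) :
    (HahnSeries.ofPowerSeries Γ R (PowerSeries.X ^ n * f)).orderTop =
      n + (HahnSeries.ofPowerSeries Γ R f).orderTop := by
  rw [map_mul, HahnSeries.orderTop_mul, HahnSeries.ofPowerSeries_X_pow,
    HahnSeries.orderTop_single one_ne_zero, WithTop.coe_natCast]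

lemma natCast_le_orderTop_ofPowerSeries {n : ℕ} {f : PowerSeries R} (hf : PowerSeries.X ^ n ∣ f) :
    (n : WithTop Γ) ≤ (HahnSeries.ofPowerSeries Γ R f).orderTop := by
  obtain ⟨g, rfl⟩ := hf
  rw [orderTop_ofPowerSeries_X_pow_mul]
  exact le_add_of_nonneg_right (zero_le_orderTop_ofPowerSeries g)

lemma IsAboveSlopeOne.one_le_orderTop_of_isRoot {P : Cubic (PowerSeries R)}
    (hP : IsAboveSlopeOne P) (ha : PowerSeries.constantCoeff P.a ≠ 0) {s : HahnSeries Γ R}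
    (hs : (P.map (HahnSeries.ofPowerSeries Γ R)).toPoly.IsRoot s) : 1 ≤ s.orderTop := by
  have ha₀ : (P.map (HahnSeries.ofPowerSeries Γ R)).a ≠ 0 :=
    HahnSeries.orderTop_ne_top.mp (by simp [Cubic.map, orderTop_ofPowerSeries_eq_zero ha])
  refine le_addValuation_of_isRoot (HahnSeries.addVal Γ R) (m := 1) hs ?_ ?_
  · rw [Cubic.leadingCoeff_of_a_ne_zero ha₀, HahnSeries.addVal_apply]
    exact orderTop_ofPowerSeries_eq_zero ha
  · intro j hj
    rw [Cubic.natDegree_of_a_ne_zero ha₀] at hj ⊢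
    rw [HahnSeries.addVal_apply, nsmul_one, WithTop.coe_natCast]
    interval_cases j
    · simpa [Cubic.map] using natCast_le_orderTop_ofPowerSeries (Γ := Γ) hP.dvd_d
    · simpa [Cubic.map] using natCast_le_orderTop_ofPowerSeries (Γ := Γ) hP.dvd_c
    · have hb : PowerSeries.X ^ 1 ∣ P.b := by simpa using hP.dvd_b
      simpa [Cubic.map] using natCast_le_orderTop_ofPowerSeries (Γ := Γ) hb

lemma IsAboveSlopeOne.orderTop_discr {P : Cubic (PowerSeries R)} (hP : IsAboveSlopeOne P)
    (hdiscr : (initialForm P).discr ≠ 0) :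
    (P.map (HahnSeries.ofPowerSeries Γ R)).discr.orderTop = 6 := by
  obtain ⟨δ, hPδ, hδ⟩ := hP.exists_discr_eq_X_pow_mul
  rw [cubic_discr_map, hPδ, orderTop_ofPowerSeries_X_pow_mul,
    orderTop_ofPowerSeries_eq_zero (hδ ▸ hdiscr), add_zero, Nat.cast_ofNat]

lemma IsAboveSlopeOne.order_sub_eq_one {P : Cubic (PowerSeries R)} (hP : IsAboveSlopeOne P)
    (ha : PowerSeries.constantCoeff P.a ≠ 0) (hdiscr : (initialForm P).discr ≠ 0)
    {c : HahnSeries Γ R} {s : Fin 3 → HahnSeries Γ R}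
    (hsplit : (P.map (HahnSeries.ofPowerSeries Γ R)).toPoly = C c * ∏ i, (X - C (s i)))
    {i j : Fin 3} (hij : i ≠ j) : (s i - s j).order = 1 := by
  have hroot (i : Fin 3) : (1 : WithTop Γ) ≤ (s i).orderTop :=
    hP.one_le_orderTop_of_isRoot ha <| by
      rw [hsplit, IsRoot.def, eval_mul, eval_prod, prod_eq_zero (mem_univ i) (by simp), mul_zero]
  have hprod : HahnSeries.addVal Γ R (∏ q ∈ univ.offDiag, (s q.1 - s q.2)) = 6 := by
    have hlead : HahnSeries.addVal Γ R (P.map (HahnSeries.ofPowerSeries Γ R)).a = 0 :=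
      orderTop_ofPowerSeries_eq_zero ha
    have hval : HahnSeries.addVal Γ R (P.map (HahnSeries.ofPowerSeries Γ R)).discr = 6 :=
      hP.orderTop_discr hdiscr
    rwa [cubic_discr_eq_neg_prod_offDiag hsplit, AddValuation.map_neg, AddValuation.map_mul,
      AddValuation.map_pow, hlead, smul_zero, zero_add] at hval
  have hsub : (s i - s j).orderTop = ((1 : Γ) : WithTop Γ) :=
    addValuation_sub_eq_of_addValuation_prod_offDiag_eq (HahnSeries.addVal Γ R) hroot
      (by simpa [offDiag_card] using hprod) hij
  have hne : s i - s j ≠ 0 := HahnSeries.orderTop_ne_top.mp (by simp [hsub])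
  rwa [← HahnSeries.order_eq_orderTop_of_ne_zero hne, WithTop.coe_inj] at hsub

end HahnSeries

section Family

variable {A L : Type*} [CommRing A] [Field L]

/-- The cubic over `A[[t]]` given by a family `Σ_i p_i(x) t^i` of polynomials of degree at
most `3`. -/
def famCubic (p : ℕ → A[X]) : Cubic (PowerSeries A) :=
  ⟨PowerSeries.mk fun i => (p i).coeff 3, PowerSeries.mk fun i => (p i).coeff 2,
    PowerSeries.mk fun i => (p i).coeff 1, PowerSeries.mk fun i => (p i).coeff 0⟩

lemma fam_three_eq_toPoly_famCubic (p : ℕ → A[X]) : fam 3 p = (famCubic p).toPoly := by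
  simp only [fam, famCubic, Cubic.toPoly, sum_range_succ, range_zero, sum_empty]
  ring

lemma map_Phi_toPoly (φ : A →+* L) (P : Cubic (PowerSeries A)) :
    P.toPoly.map (Phi φ) =
      ((P.map (PowerSeries.map φ)).map (HahnSeries.ofPowerSeries ℚ L)).toPoly := by
  rw [Cubic.map_toPoly, Cubic.map_toPoly, Polynomial.map_map, Phi]

variable {C₂ : A[X]} {p : ℕ → A[X]}

lemma isAboveSlopeOne_famCubic (hp0 : p 0 = X ^ 3) (hp1 : p 1 = 0) (hp2 : p 2 = X * C₂) :
    IsAboveSlopeOne (famCubic p) where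
  dvd_b := PowerSeries.X_dvd_iff.mpr (by simp [famCubic, hp0, coeff_X_pow])
  dvd_c := PowerSeries.X_pow_dvd_iff.mpr fun i hi => by
    interval_cases i <;> simp [famCubic, hp0, hp1, coeff_X_pow]
  dvd_d := PowerSeries.X_pow_dvd_iff.mpr fun i hi => by
    interval_cases i <;> simp [famCubic, hp0, hp1, hp2]

lemma discr_initialForm_famCubic (hp0 : p 0 = X ^ 3) (hp1 : p 1 = 0) (hp2 : p 2 = X * C₂) :
    (initialForm (famCubic p)).discr = -(4 * C₂ ^ 3 + 27 * p 3 ^ 2).coeff 0 := by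
  have hform : initialForm (famCubic p) = ⟨1, 0, C₂.coeff 0, (p 3).coeff 0⟩ := by
    simp [initialForm, famCubic, hp0, hp1, hp2]
  rw [hform]
  simp only [Cubic.discr, coeff_zero_eq_eval_zero, eval_add, eval_mul, eval_pow, eval_ofNat]
  ring

theorem stmt17_general {φ : A →+* L} (hφ : Function.Injective φ) {F₃ : A[X]}
    (hp0 : p 0 = X ^ 3) (hp1 : p 1 = 0) (hp2 : p 2 = X * C₂) (hp3 : p 3 = F₃)
    (hx : ¬ X ∣ 4 * C₂ ^ 3 + 27 * F₃ ^ 2) {s : Fin 3 → HahnSeries ℚ L} {c : HahnSeries ℚ L}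
    (hsplit : (fam 3 p).map (Phi φ) = C c * ∏ i, (X - C (s i))) {i j : Fin 3} (hij : i ≠ j) :
    (s i - s j).order = 1 := by
  rw [fam_three_eq_toPoly_famCubic, map_Phi_toPoly] at hsplit
  refine ((isAboveSlopeOne_famCubic hp0 hp1 hp2).map φ).order_sub_eq_one ?_ ?_ hsplit hij
  · rw [← PowerSeries.coeff_zero_eq_constantCoeff_apply]
    simp [famCubic, Cubic.map, hp0]
  · rwa [initialForm_map, cubic_discr_map, map_ne_zero_iff φ hφ,
      discr_initialForm_famCubic hp0 hp1 hp2, hp3, neg_ne_zero, Ne, ← X_dvd_iff]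

end Family

/-- **Example 4.9 (c).**  Let `A = k[y]` and
`F(x,t) = x³ + x C₂(x) t² + F₃(x) t³ + O(t⁴)` with `x ∤ (4C₂³ + 27F₃²)` and
`Δ_{A[[t]]}(F) ≠ 0`.  Then the general type of `F` is `τ = 3`:
here `F_0 = x³`, so the only factor is `f = x` with multiplicity `3`, whose three
`t`-roots are the `s i`, and `τ = ⌊3 · max_{i≠j} ord(s i − s j)⌋ = 3`. -/
theorem stmt17 {k L : Type*} [Field k] [IsAlgClosed k] [CharZero k]
    [Field L] [IsAlgClosed L] [CharZero L]
    (φ : Polynomial k →+* L) (hφ : Function.Injective φ)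
    (C₂ F₃ : Polynomial (Polynomial k))
    (p : ℕ → Polynomial (Polynomial k)) (hdeg : ∀ i, (p i).natDegree ≤ 3)
    (hp0 : p 0 = X ^ 3) (hp1 : p 1 = 0) (hp2 : p 2 = X * C₂) (hp3 : p 3 = F₃)
    (hx : ¬ (X ∣ (4 * C₂ ^ 3 + 27 * F₃ ^ 2)))
    (s : Fin 3 → HahnSeries ℚ L) (hs : ∀ i, HasConst (s i) 0)
    (c : HahnSeries ℚ L)
    (hsplit : (fam 3 p).map (Phi φ) = C c * ∏ i, (X - C (s i)))
    (hΔ : rootsSep s ≠ 0) :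
    (∀ i j, i ≠ j → ⌊(3 : ℚ) * (s i - s j).order⌋ ≤ 3) ∧
      ∃ i j, i ≠ j ∧ ⌊(3 : ℚ) * (s i - s j).order⌋ = 3 := by
  have horder {i j : Fin 3} (hij : i ≠ j) : (s i - s j).order = 1 :=
    stmt17_general hφ hp0 hp1 hp2 hp3 hx hsplit hij
  exact ⟨fun i j hij => by simp [horder hij], 0, 1, by decide, by simp [horder]⟩
end
end
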